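/- arXiv:1310.0081 — 2 statements merged into one kernel-verified Lean document; each statement's English description precedes it below -/
import Mathlib

section
/- Let Ω ⊆ ℝⁿ be open, let X, Y : Ω → ℝⁿ be C¹ vector fields, and let f : Ω → ℝ be continuous with DX(p)(Y(p)) − DY(p)(X(p)) = f(p) • X(p) for all p ∈ Ω (Y tracks X). Let I ⊆ ℝ be an open interval and γ : I → Ω an integral curve of X. Let s ∈ ℝ, let J ⊆ ℝ be an open interval containing 0 and s, and let β : J × I → Ω be a C¹ map such that β(0, t) = γ(t) for all t ∈ I and, for each fixed t ∈ I, the curve u ↦ β(u, t) is an integral curve of Y on J. Then there exists a continuous function λ : I → ℝ with λ(t) > 0 for all t ∈ I such that for every t ∈ I the curve t' ↦ β(s, t') has derivative λ(t) • X(β(s, t)) at t. In particular the time-s map of the local flow of Y carries X-orbits to X-orbits. -/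
open Set

/-!
Fix `t` and compare two solutions of the linear equation `w' = DY(β(u, t)) w` in `u`. One is
`∂β/∂t`, because every `β(·, t')` solves `c' = Y(c)`; as `β` is only `C¹`, exchanging the two
partial derivatives relies on Peano's version of Schwarz's theorem. The other is
`exp (-∫₀ᵘ f(β(v, t)) dv) • X(β(u, t))`: along `c' = Y(c)` the derivative of `X(c)` is
`DX(Y) = DY(X) + f X`, and the exponential factor cancels the term `f X`. They agree at `u = 0`,
hence at `u = s`.
-/

open Filter Function Topology VectorField

section MixedPartials

variable {𝕜 E : Type*} [RCLike 𝕜] [NormedAddCommGroup E] [NormedSpace 𝕜 E]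
  {b F G : 𝕜 → 𝕜 → E}

theorem norm_second_difference_sub_smul_le {S T : Set 𝕜} (hS : Convex ℝ S) (hT : Convex ℝ T)
    (hF : ∀ x ∈ S, ∀ y ∈ T, HasDerivWithinAt (fun x' => b x' y) (F x y) S x)
    (hG : ∀ x ∈ S, ∀ y ∈ T, HasDerivWithinAt (F x) (G x y) T y)
    {c : E} {ε : ℝ} (hc : ∀ x ∈ S, ∀ y ∈ T, ‖G x y - c‖ ≤ ε)
    {x x' y y' : 𝕜} (hx : x ∈ S) (hx' : x' ∈ S) (hy : y ∈ T) (hy' : y' ∈ T) :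
    ‖(b x' y' - b x' y) - (b x y' - b x y) - ((x' - x) * (y' - y)) • c‖
      ≤ ε * ‖y' - y‖ * ‖x' - x‖ := by
  have first_difference : ∀ ξ ∈ S, ‖F ξ y' - F ξ y - (y' - y) • c‖ ≤ ε * ‖y' - y‖ := by
    intro ξ hξ
    have hderiv : ∀ η ∈ T, HasDerivWithinAt (fun η => F ξ η - η • c) (G ξ η - c) T η :=
      fun η hη => (hG ξ hξ η hη).sub
        (by simpa using (hasDerivWithinAt_id η T).smul_const c)
    convert hT.norm_image_sub_le_of_norm_hasDerivWithin_le hderiv (hc ξ hξ) hy hy' using 2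
    module
  have hderiv : ∀ ξ ∈ S, HasDerivWithinAt (fun ξ => b ξ y' - b ξ y - ξ • (y' - y) • c)
      (F ξ y' - F ξ y - (y' - y) • c) S ξ :=
    fun ξ hξ => ((hF ξ hξ y' hy').sub (hF ξ hξ y hy)).sub
      (by simpa using (hasDerivWithinAt_id ξ S).smul_const ((y' - y) • c))
  convert hS.norm_image_sub_le_of_norm_hasDerivWithin_le hderiv first_difference hx hx' using 2
  module

theorem hasDerivAt_partial_swap {W : 𝕜 → E} {u t : 𝕜}
    (hF : ∀ᶠ q in 𝓝 (u, t), HasDerivAt (fun x => b x q.2) (F q.1 q.2) q.1)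
    (hG : ∀ᶠ q in 𝓝 (u, t), HasDerivAt (F q.1) (G q.1 q.2) q.2)
    (hGc : ContinuousAt (uncurry G) (u, t))
    (hW : ∀ᶠ x in 𝓝 u, HasDerivAt (b x) (W x) t) :
    HasDerivAt W (G u t) u := by
  refine .of_isLittleO (Asymptotics.isLittleO_iff.2 fun ε hε => ?_)
  have hGε : ∀ᶠ q in 𝓝 (u, t), ‖G q.1 q.2 - G u t‖ ≤ ε :=
    (hGc.eventually (Metric.closedBall_mem_nhds _ hε)).mono fun q hq => mem_closedBall_iff_norm.1 hq
  obtain ⟨δ, hδ, hball⟩ := Metric.eventually_nhds_iff_ball.1 (hF.and (hG.and hGε))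
  simp only [← ball_prod_same, mem_prod, Prod.forall, and_imp] at hball
  have hu := Metric.mem_ball_self (x := u) hδ
  have ht := Metric.mem_ball_self (x := t) hδ
  filter_upwards [Metric.ball_mem_nhds u hδ, hW] with x hx hWx
  have hderiv : HasDerivAt (fun y => (b x y - b u y) - ((x - u) * (y - t)) • G u t)
      (W x - W u - (x - u) • G u t) t :=
    (hWx.sub hW.self_of_nhds).sub
      (by simpa using (((hasDerivAt_id t).sub_const t).const_mul (x - u)).smul_const (G u t))
  refine hderiv.le_of_lip' (by positivity) ?_
  filter_upwards [Metric.ball_mem_nhds t hδ] with y hy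
  have hsecond := norm_second_difference_sub_smul_le (convex_ball u δ) (convex_ball t δ)
    (fun x hx y hy => (hball x y hx hy).1.hasDerivWithinAt)
    (fun x hx y hy => (hball x y hx hy).2.1.hasDerivWithinAt)
    (fun x hx y hy => (hball x y hx hy).2.2) hu hx ht hy
  convert hsecond using 1
  · congr 1
    simp only [sub_self, mul_zero, zero_smul]
    abel
  · ring

end MixedPartials

section PartialDerivative

variable {𝕜 E : Type*} [NontriviallyNormedField 𝕜] [NormedAddCommGroup E] [NormedSpace 𝕜 E]
  {β : 𝕜 → 𝕜 → E} {U : Set (𝕜 × 𝕜)}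

theorem hasDerivAt_snd_of_contDiffOn (hU : IsOpen U) (hβ : ContDiffOn 𝕜 1 (uncurry β) U)
    {q : 𝕜 × 𝕜} (hq : q ∈ U) :
    HasDerivAt (β q.1) (fderiv 𝕜 (uncurry β) q (0, 1)) q.2 :=
  have hβ' : HasFDerivAt (uncurry β) (fderiv 𝕜 (uncurry β) q) q :=
    ((hβ.differentiableOn one_ne_zero).differentiableAt (hU.mem_nhds hq)).hasFDerivAt
  hβ'.comp_hasDerivAt (f := fun t => (q.1, t)) q.2
    ((hasDerivAt_const q.2 q.1).prodMk (hasDerivAt_id q.2))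

theorem continuousOn_deriv_snd_of_contDiffOn (hU : IsOpen U)
    (hβ : ContDiffOn 𝕜 1 (uncurry β) U) :
    ContinuousOn (fun q : 𝕜 × 𝕜 => deriv (β q.1) q.2) U :=
  ((hβ.continuousOn_fderiv_of_isOpen hU le_rfl).clm_apply continuousOn_const).congr
    fun _ hq => (hasDerivAt_snd_of_contDiffOn hU hβ hq).deriv

end PartialDerivative

theorem hasDerivAt_variational_equation {𝕜 E : Type*} [RCLike 𝕜] [NormedAddCommGroup E]
    [NormedSpace 𝕜 E] {β : 𝕜 → 𝕜 → E} {U : Set (𝕜 × 𝕜)} {Y : E → E} {Ω : Set E} (hΩ : IsOpen Ω)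
    (hY : ContDiffOn 𝕜 1 Y Ω) (hU : IsOpen U) (hβ : ContDiffOn 𝕜 1 (uncurry β) U)
    (hβΩ : MapsTo (uncurry β) U Ω)
    (hβY : ∀ q ∈ U, HasDerivAt (fun u => β u q.2) (Y (β q.1 q.2)) q.1)
    {u t : 𝕜} (hut : (u, t) ∈ U) :
    HasDerivAt (fun u => deriv (β u) t) (fderiv 𝕜 Y (β u t) (deriv (β u) t)) u := by
  have hUnhds : U ∈ 𝓝 (u, t) := hU.mem_nhds hut
  have hβt : ∀ q ∈ U, HasDerivAt (β q.1) (deriv (β q.1) q.2) q.2 :=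
    fun q hq => (hasDerivAt_snd_of_contDiffOn hU hβ hq).differentiableAt.hasDerivAt
  have hY' : ∀ q ∈ U, HasFDerivAt Y (fderiv 𝕜 Y (β q.1 q.2)) (β q.1 q.2) := fun q hq =>
    ((hY.differentiableOn one_ne_zero).differentiableAt (hΩ.mem_nhds (hβΩ hq))).hasFDerivAt
  refine hasDerivAt_partial_swap (b := β) (F := fun u t => Y (β u t))
    (G := fun u t => fderiv 𝕜 Y (β u t) (deriv (β u) t)) ?_ ?_ ?_ ?_
  · filter_upwards [hUnhds] with q hq using hβY q hq
  · filter_upwards [hUnhds] with q hq using (hY' q hq).comp_hasDerivAt q.2 (hβt q hq)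
  · exact (((hY.continuousOn_fderiv_of_isOpen hΩ le_rfl).comp hβ.continuousOn hβΩ).clm_apply
      (continuousOn_deriv_snd_of_contDiffOn hU hβ)).continuousAt hUnhds
  · have hslice : ∀ᶠ x in 𝓝 u, (x, t) ∈ U :=
      (Continuous.prodMk_left t).continuousAt.eventually hUnhds
    filter_upwards [hslice] with x hx using hβt (x, t) hx

theorem hasDerivAt_smul_comp_of_lieBracket_eq_smul {𝕜 E : Type*} [NontriviallyNormedField 𝕜]
    [NormedAddCommGroup E] [NormedSpace 𝕜 E] {X Y : E → E} {c : 𝕜 → E} {φ : 𝕜 → 𝕜} {k u : 𝕜}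
    (hX : DifferentiableAt 𝕜 X (c u)) (hc : HasDerivAt c (Y (c u)) u)
    (htrack : lieBracket 𝕜 Y X (c u) = k • X (c u)) (hφ : HasDerivAt φ (-(k * φ u)) u) :
    HasDerivAt (fun v => φ v • X (c v)) (fderiv 𝕜 Y (c u) (φ u • X (c u))) u := by
  have hXY : fderiv 𝕜 X (c u) (Y (c u)) = fderiv 𝕜 Y (c u) (X (c u)) + k • X (c u) :=
    sub_eq_iff_eq_add'.1 htrack
  refine (hφ.smul (hX.hasFDerivAt.comp_hasDerivAt u hc)).congr_deriv ?_
  rw [hXY, map_smul, comp_apply]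
  module

theorem linear_ode_solution_unique {E : Type*} [NormedAddCommGroup E] [NormedSpace ℝ E]
    {J : Set ℝ} (hJ : J.OrdConnected) {A : ℝ → E →L[ℝ] E} (hA : ContinuousOn A J) {w z : ℝ → E}
    (hw : IsIntegralCurveOn w (fun u => A u) J) (hz : IsIntegralCurveOn z (fun u => A u) J)
    {a : ℝ} (ha : a ∈ J) (hwz : w a = z a) : EqOn w z J := by
  intro s hs
  have hsub : uIcc a s ⊆ J := hJ.uIcc_subset ha hs
  obtain ⟨C, hC⟩ := isCompact_uIcc.exists_bound_of_continuousOn (hA.mono hsub)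
  have hlip : ∀ u ∈ uIcc a s, LipschitzOnWith C.toNNReal (A u) univ := fun u hu =>
    ((A u).lipschitz.weaken (by
      rw [← norm_toNNReal]; exact Real.toNNReal_le_toNNReal (hC u hu))).lipschitzOnWith
  have hw' := hw.mono hsub
  have hz' := hz.mono hsub
  rcases le_total a s with has | hsa
  · rw [uIcc_of_le has] at hlip hw' hz'
    have hright {y : ℝ → E} (hy : IsIntegralCurveOn y (fun u => A u) (Icc a s)) :
        ∀ u ∈ Ico a s, HasDerivWithinAt y (A u (y u)) (Ici u) u := fun u hu =>
      (hy u (Ico_subset_Icc_self hu)).mono_of_mem_nhdsWithin (Icc_mem_nhdsGE_of_mem hu)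
    exact ODE_solution_unique_of_mem_Icc_right (fun u hu => hlip u (Ico_subset_Icc_self hu))
      hw'.continuousOn (hright hw') (fun _ _ => mem_univ _)
      hz'.continuousOn (hright hz') (fun _ _ => mem_univ _) hwz (right_mem_Icc.2 has)
  · rw [uIcc_of_ge hsa] at hlip hw' hz'
    have hleft {y : ℝ → E} (hy : IsIntegralCurveOn y (fun u => A u) (Icc s a)) :
        ∀ u ∈ Ioc s a, HasDerivWithinAt y (A u (y u)) (Iic u) u := fun u hu =>
      (hy u (Ioc_subset_Icc_self hu)).mono_of_mem_nhdsWithin (Icc_mem_nhdsLE_of_mem hu)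
    exact ODE_solution_unique_of_mem_Icc_left (fun u hu => hlip u (Ioc_subset_Icc_self hu))
      hw'.continuousOn (hleft hw') (fun _ _ => mem_univ _)
      hz'.continuousOn (hleft hz') (fun _ _ => mem_univ _) hwz (left_mem_Icc.2 hsa)

theorem continuousOn_intervalIntegral_of_continuousOn_prod {P E : Type*} [TopologicalSpace P]
    [NormedAddCommGroup E] [NormedSpace ℝ E] {T : Set P} {a b : ℝ} {g : P → ℝ → E}
    (hg : ContinuousOn (uncurry g) (T ×ˢ uIcc a b)) :
    ContinuousOn (fun p => ∫ v in a..b, g p v) T := by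
  rw [continuousOn_iff_continuous_domRestrict]
  -- Freezing `g p` outside `uIcc a b` makes it globally continuous without changing the integral.
  have hext : Continuous (uncurry fun (p : T) (v : ℝ) => g p (projIcc _ _ inf_le_sup v)) :=
    hg.comp_continuous (f := fun q : T × ℝ => ((q.1 : P), (projIcc _ _ inf_le_sup q.2 : ℝ)))
      (by fun_prop) fun q => ⟨q.1.2, (projIcc _ _ inf_le_sup q.2).2⟩
  refine (intervalIntegral.continuous_parametric_intervalIntegral_of_continuous'
    (μ := MeasureTheory.volume) hext a b).congr fun p => ?_
  refine intervalIntegral.integral_congr fun v hv => ?_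
  simp only [projIcc_of_mem inf_le_sup hv]

section TrackingFactor

variable {E : Type*}

/-- The factor by which the flow of `Y` from time `a` to time `s` rescales `X` along an integral
curve `c` of `Y`, when `[Y, X] = f • X`: the flow carries the vector `X (c a)` to
`trackingFactor f c a s • X (c s)`. -/
noncomputable def trackingFactor (f : E → ℝ) (c : ℝ → E) (a s : ℝ) : ℝ :=
  Real.exp (-∫ v in a..s, f (c v))

theorem trackingFactor_self (f : E → ℝ) (c : ℝ → E) (a : ℝ) : trackingFactor f c a a = 1 := by
  simp [trackingFactor]

theorem trackingFactor_pos (f : E → ℝ) (c : ℝ → E) (a s : ℝ) : 0 < trackingFactor f c a s :=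
  Real.exp_pos _

theorem hasDerivAt_trackingFactor {f : E → ℝ} {c : ℝ → E} {J : Set ℝ} (hJ : IsOpen J)
    (hJc : J.OrdConnected) (hfc : ContinuousOn (f ∘ c) J) {a u : ℝ} (ha : a ∈ J) (hu : u ∈ J) :
    HasDerivAt (trackingFactor f c a) (-(f (c u) * trackingFactor f c a u)) u := by
  have hint : HasDerivAt (fun s => ∫ v in a..s, f (c v)) (f (c u)) u :=
    intervalIntegral.integral_hasDerivAt_right
      (hfc.mono (hJc.uIcc_subset ha hu)).intervalIntegrable
      (hfc.stronglyMeasurableAtFilter hJ u hu) (hfc.continuousAt (hJ.mem_nhds hu))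
  exact hint.neg.exp.congr_deriv (by rw [mul_neg, mul_comm]; rfl)

theorem continuousOn_trackingFactor {P : Type*} [TopologicalSpace P] {f : E → ℝ}
    {c : P → ℝ → E} {T : Set P} {a s : ℝ}
    (hfc : ContinuousOn (fun q : P × ℝ => f (c q.1 q.2)) (T ×ˢ uIcc a s)) :
    ContinuousOn (fun p => trackingFactor f (c p) a s) T :=
  Real.continuous_exp.comp_continuousOn
    (continuousOn_intervalIntegral_of_continuousOn_prod hfc).neg

end TrackingFactor

section TransportedCurve

variable {E : Type*} [NormedAddCommGroup E] [NormedSpace ℝ E] {Ω : Set E} {X Y : E → E}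
  {f : E → ℝ} {I J : Set ℝ} {β : ℝ → ℝ → E} {a s : ℝ}

theorem deriv_transported_curve_eq_trackingFactor_smul (hΩ : IsOpen Ω)
    (hX : DifferentiableOn ℝ X Ω) (hY : ContDiffOn ℝ 1 Y Ω) (hf : ContinuousOn f Ω)
    (htrack : ∀ p ∈ Ω, lieBracket ℝ Y X p = f p • X p) (hI : IsOpen I) (hJ : IsOpen J)
    (hJc : J.OrdConnected) (ha : a ∈ J) (hs : s ∈ J) (hβΩ : MapsTo (uncurry β) (J ×ˢ I) Ω)
    (hβ : ContDiffOn ℝ 1 (uncurry β) (J ×ˢ I))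
    (hβY : ∀ q ∈ J ×ˢ I, HasDerivAt (fun u => β u q.2) (Y (β q.1 q.2)) q.1) {t : ℝ} (ht : t ∈ I)
    (hβa : HasDerivAt (β a) (X (β a t)) t) :
    deriv (β s) t = trackingFactor f (fun u => β u t) a s • X (β s t) := by
  have hmaps : MapsTo (fun u => β u t) J Ω := fun u hu => hβΩ (mk_mem_prod hu ht)
  have hc : ∀ u ∈ J, HasDerivAt (fun u => β u t) (Y (β u t)) u :=
    fun u hu => hβY (u, t) (mk_mem_prod hu ht)
  have hcont : ContinuousOn (fun u => β u t) J :=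
    fun u hu => (hc u hu).continuousAt.continuousWithinAt
  refine linear_ode_solution_unique hJc (w := fun u => deriv (β u) t)
    (z := fun u => trackingFactor f (fun u => β u t) a u • X (β u t))
    ((hY.continuousOn_fderiv_of_isOpen hΩ le_rfl).comp hcont hmaps)
    (fun u hu => ?_) (fun u hu => ?_) ha ?_ hs
  · exact (hasDerivAt_variational_equation hΩ hY (hJ.prod hI) hβ hβΩ hβY
      (mk_mem_prod hu ht)).hasDerivWithinAt
  · exact (hasDerivAt_smul_comp_of_lieBracket_eq_smul (c := fun u => β u t)
      (hX.differentiableAt (hΩ.mem_nhds (hmaps hu))) (hc u hu) (htrack _ (hmaps hu))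
      (hasDerivAt_trackingFactor hJ hJc (hf.comp hcont hmaps) ha hu)).hasDerivWithinAt
  · simp only [hβa.deriv, trackingFactor_self, one_smul]

theorem flow_of_tracking_permutes_orbits_general (hΩ : IsOpen Ω)
    (hX : DifferentiableOn ℝ X Ω) (hY : ContDiffOn ℝ 1 Y Ω) (hf : ContinuousOn f Ω)
    (htrack : ∀ p ∈ Ω, lieBracket ℝ Y X p = f p • X p) (hI : IsOpen I) (hJ : IsOpen J)
    (hJc : J.OrdConnected) (ha : a ∈ J) (hs : s ∈ J) (hβΩ : MapsTo (uncurry β) (J ×ˢ I) Ω)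
    (hβ : ContDiffOn ℝ 1 (uncurry β) (J ×ˢ I))
    (hβY : ∀ q ∈ J ×ˢ I, HasDerivAt (fun u => β u q.2) (Y (β q.1 q.2)) q.1)
    (hβa : ∀ t ∈ I, HasDerivAt (β a) (X (β a t)) t) :
    ∃ lam : ℝ → ℝ, ContinuousOn lam I ∧ (∀ t ∈ I, 0 < lam t) ∧
      ∀ t ∈ I, HasDerivAt (β s) (lam t • X (β s t)) t := by
  refine ⟨fun t => trackingFactor f (fun u => β u t) a s, continuousOn_trackingFactor ?_,
    fun t _ => trackingFactor_pos _ _ _ _, fun t ht => ?_⟩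
  · exact (hf.comp hβ.continuousOn hβΩ).comp (f := Prod.swap) continuous_swap.continuousOn
      fun q hq => ⟨hJc.uIcc_subset ha hs hq.2, hq.1⟩
  · rw [← deriv_transported_curve_eq_trackingFactor_smul hΩ hX hY hf htrack hI hJ hJc ha hs hβΩ
      hβ hβY ht (hβa t ht)]
    exact (hasDerivAt_snd_of_contDiffOn (hJ.prod hI) hβ
      (mk_mem_prod hs ht)).differentiableAt.hasDerivAt

end TransportedCurve

/-- **Hirsch, Proposition 2.4 (local form).**
If `Y` tracks `X`, the time-`s` map of the local flow of `Y` carries `X`-orbits to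
`X`-orbits: if `β(u, t)` flows the `X`-integral curve `γ` along `Y`, then `t' ↦ β(s, t')`
is, up to a positive continuous reparametrizing factor `λ`, an integral curve of `X`. -/
theorem flow_of_tracking_permutes_orbits
    (n : ℕ) (Ω : Set (EuclideanSpace ℝ (Fin n))) (hΩ : IsOpen Ω)
    (X Y : EuclideanSpace ℝ (Fin n) → EuclideanSpace ℝ (Fin n))
    (hX : ContDiffOn ℝ 1 X Ω) (hY : ContDiffOn ℝ 1 Y Ω)
    (f : EuclideanSpace ℝ (Fin n) → ℝ) (hf : ContinuousOn f Ω)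
    (htrack : ∀ p ∈ Ω, fderiv ℝ X p (Y p) - fderiv ℝ Y p (X p) = f p • X p)
    (I : Set ℝ) (hIopen : IsOpen I) (hIinterval : I.OrdConnected)
    (γ : ℝ → EuclideanSpace ℝ (Fin n)) (hγΩ : ∀ t ∈ I, γ t ∈ Ω)
    (hγ : ∀ t ∈ I, HasDerivAt γ (X (γ t)) t)
    (s : ℝ) (J : Set ℝ) (hJopen : IsOpen J) (hJinterval : J.OrdConnected)
    (h0J : (0 : ℝ) ∈ J) (hsJ : s ∈ J)
    (β : ℝ → ℝ → EuclideanSpace ℝ (Fin n))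
    (hβΩ : ∀ u ∈ J, ∀ t ∈ I, β u t ∈ Ω)
    (hβC1 : ContDiffOn ℝ 1 (fun q : ℝ × ℝ => β q.1 q.2) (J ×ˢ I))
    (hβ0 : ∀ t ∈ I, β 0 t = γ t)
    (hβY : ∀ t ∈ I, ∀ u ∈ J, HasDerivAt (fun u' => β u' t) (Y (β u t)) u) :
    ∃ lam : ℝ → ℝ, ContinuousOn lam I ∧ (∀ t ∈ I, 0 < lam t) ∧
      ∀ t ∈ I, HasDerivAt (fun t' => β s t') (lam t • X (β s t)) t := by
  have hβ0X : ∀ t ∈ I, HasDerivAt (β 0) (X (β 0 t)) t := fun t ht => by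
    rw [hβ0 t ht]
    exact (hγ t ht).congr_of_eventuallyEq (eventually_of_mem (hIopen.mem_nhds ht) hβ0)
  exact flow_of_tracking_permutes_orbits_general hΩ (hX.differentiableOn one_ne_zero) hY hf htrack
    hIopen hJopen hJinterval h0J hsJ (fun q hq => hβΩ _ hq.1 _ hq.2) hβC1
    (fun q hq => hβY _ hq.2 _ hq.1) hβ0X
end

section
/- Let Ω ⊆ ℝⁿ be open and let U ⊆ Ω be an open set whose closure is compact and contained in Ω. Give the space C(Ω, ℝⁿ) of continuous maps Ω → ℝⁿ the compact-open topology. Then the set of continuous vector fields Y : Ω → ℝⁿ such that {p ∈ U : Y(p) = 0} is finite is dense in C(Ω, ℝⁿ). -/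
open Set

/-!
The vector fields that extend to a smooth map on the ambient space are dense, by Tietze extension
and smoothing. If `f` is smooth, then by Sard's lemma it has regular values `v` arbitrarily close to
`0`, so `f` is a limit of the maps `f - v`. Since the derivative is invertible at every zero of
`f - v`, these zeros are isolated; they form a closed set, so only finitely many of them lie in a
given compact set.
-/

open Filter Topology MeasureTheory

section RegularValue

variable {E F : Type*} [NormedAddCommGroup E] [NormedSpace ℝ E] [NormedAddCommGroup F]
  [NormedSpace ℝ F]

/-- A point `v` is a regular value of `f` if the derivative of `f` is surjective at every point of
the fibre over `v`. Points outside the range of `f` are regular values. At a point where `f` is not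
differentiable the derivative is taken to be `0`. -/
def IsRegularValue (f : E → F) (v : F) : Prop :=
  ∀ x, f x = v → Function.Surjective (fderiv ℝ f x)

variable [FiniteDimensional ℝ E]

theorem dense_setOf_isRegularValue {f : E → E} (hf : Differentiable ℝ f) :
    Dense {v | IsRegularValue f v} := by
  borelize E
  have critical_values_null : Measure.addHaar (f '' {x | (fderiv ℝ f x).det = 0}) = 0 :=
    addHaar_image_eq_zero_of_det_fderivWithin_eq_zero _
      (fun x _ ↦ (hf x).hasFDerivAt.hasFDerivWithinAt) fun _ hx ↦ hx
  refine (Measure.dense_of_ae (measure_eq_zero_iff_ae_notMem.1 critical_values_null)).mono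
    fun v hv x hx ↦ ?_
  have det_ne_zero : (fderiv ℝ f x).det ≠ 0 := fun h ↦ hv ⟨x, h, hx⟩
  exact ((fderiv ℝ f x).toContinuousLinearEquivOfDetNeZero det_ne_zero).surjective

theorem preimage_compl_singleton_mem_codiscrete_of_injective_fderiv {f : E → F} {v : F}
    (hf : Differentiable ℝ f) (hv : ∀ x, f x = v → Function.Injective (fderiv ℝ f x)) :
    f ⁻¹' {v}ᶜ ∈ codiscrete E := by
  refine mem_codiscreteWithin_iff_forall_mem_nhdsNE.2 fun x _ ↦ ?_
  have eventually_ne : ∀ᶠ z in 𝓝[≠] x, f z ≠ v := by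
    by_cases hx : f x = v
    · obtain ⟨C, -, hC⟩ := (fderiv ℝ f x).toLinearMap.exists_antilipschitzWith
        (LinearMap.ker_eq_bot.2 (hv x hx))
      exact (hf x).hasFDerivAt.eventually_ne ⟨C, hC⟩
    · exact (hf.continuous.continuousAt.eventually_ne hx).filter_mono nhdsWithin_le_nhds
  exact mem_of_superset eventually_ne subset_union_left

theorem IsRegularValue.finite_inter_preimage_singleton {f : E → E} {v : E}
    (hv : IsRegularValue f v) (hf : Differentiable ℝ f) {K : Set E} (hK : IsCompact K) :
    (K ∩ f ⁻¹' {v}).Finite := by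
  have compl_fiber_mem : f ⁻¹' {v}ᶜ ∈ codiscrete E :=
    preimage_compl_singleton_mem_codiscrete_of_injective_fderiv hf fun x hx ↦
      LinearMap.injective_iff_surjective.2 (hv x hx)
  simpa [Set.sdiff_eq] using hK.finite_sdiff_of_mem_codiscreteWithin
    (codiscreteWithin_mono (subset_univ K) compl_fiber_mem)

end RegularValue

theorem denseRange_comp_of_injective.{u, v, w} {X : Type u} {Y : Type v} {Z : Type w}
    [TopologicalSpace X] [TopologicalSpace Y] [T4Space Y] [UniformSpace Z]
    [TietzeExtension.{v} Z] {ι : C(X, Y)} (hι : Function.Injective ι) :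
    DenseRange fun g : C(Y, Z) ↦ g.comp ι := by
  intro f
  refine (mem_closure_iff_nhds_basis (nhds_basis_uniformity'
    ContinuousMap.hasBasis_compactConvergenceUniformity)).2 fun ⟨K, V⟩ ⟨hK, hV⟩ ↦ ?_
  have : CompactSpace K := isCompact_iff_compactSpace.1 hK
  have isClosedEmbedding : IsClosedEmbedding (ι.restrict K) :=
    (ι.restrict K).continuous.isClosedEmbedding (hι.comp Subtype.val_injective)
  obtain ⟨g, hg⟩ := ContinuousMap.exists_extension isClosedEmbedding (f.restrict K)
  refine ⟨g.comp ι, mem_range_self g, fun x hx ↦ ?_⟩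
  have g_eq : g (ι x) = f x := DFunLike.congr_fun hg ⟨x, hx⟩
  simpa [g_eq] using refl_mem_uniformity hV

theorem dense_setOf_contDiff {E F : Type*} [NormedAddCommGroup E] [NormedSpace ℝ E]
    [FiniteDimensional ℝ E] [NormedAddCommGroup F] [NormedSpace ℝ F] (n : ℕ∞) :
    Dense {f : C(E, F) | ContDiff ℝ n f} := by
  intro f
  refine (mem_closure_iff_nhds_basis (nhds_basis_uniformity'
    Metric.uniformity_basis_dist.compactConvergenceUniformity)).2 fun ⟨K, ε⟩ ⟨_, hε⟩ ↦ ?_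
  obtain ⟨g, hg, hgf, -⟩ := f.continuous.exists_contDiff_approx n continuous_const fun _ ↦ hε
  exact ⟨⟨g, hg.continuous⟩, hg, fun x _ ↦ by simpa [dist_comm] using hgf x⟩

section VectorField

variable {E X : Type*} [NormedAddCommGroup E] [NormedSpace ℝ E] [FiniteDimensional ℝ E]
  [TopologicalSpace X]

theorem comp_mem_closure_setOf_finite_zeros {f : C(E, E)} (hf : Differentiable ℝ f) {ι : C(X, E)}
    (hι : Function.Injective ι) :
    f.comp ι ∈ closure {Y : C(X, E) | ∀ K, IsCompact K → {p | ι p ∈ K ∧ Y p = 0}.Finite} := by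
  let translate (v : E) : C(X, E) := f.comp ι - .const X v
  have continuous_translate : Continuous translate := by fun_prop
  have translate_zero : translate 0 = f.comp ι := by ext; simp [translate]
  rw [← translate_zero]
  refine map_mem_closure continuous_translate (dense_setOf_isRegularValue hf 0) fun v hv K hK ↦ ?_
  refine ((hv.finite_inter_preimage_singleton hf hK).preimage hι.injOn).subset fun p ⟨hpK, hp⟩ ↦ ?_
  exact ⟨hpK, sub_eq_zero.1 hp⟩

theorem dense_finitely_many_zeros_general {ι : C(X, E)} (hι : Function.Injective ι) :
    Dense {Y : C(X, E) | ∀ K, IsCompact K → {p | ι p ∈ K ∧ Y p = 0}.Finite} := by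
  have dense_smooth : Dense ((fun f : C(E, E) ↦ f.comp ι) '' {f | ContDiff ℝ 1 f}) :=
    (denseRange_comp_of_injective hι).dense_image (ContinuousMap.continuous_precomp ι)
      (dense_setOf_contDiff 1)
  refine Dense.of_closure (dense_smooth.mono ?_)
  rintro _ ⟨f, (hf : ContDiff ℝ 1 f), rfl⟩
  exact comp_mem_closure_setOf_finite_zeros (hf.differentiable one_ne_zero) hι

end VectorField

/-- **Hirsch, Proposition 3.2(iii) (density of vector fields with finitely many zeros).**
Vector fields with only finitely many zeros in a prescribed precompact open set `U` are
dense in `C(Ω, ℝⁿ)` with the compact-open topology. -/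
theorem dense_finitely_many_zeros
    (n : ℕ) (Ω : Set (EuclideanSpace ℝ (Fin n))) (hΩ : IsOpen Ω)
    (U : Set (EuclideanSpace ℝ (Fin n))) (hUopen : IsOpen U)
    (hUcomp : IsCompact (closure U)) (hUΩ : closure U ⊆ Ω) :
    Dense {Y : C(Ω, EuclideanSpace ℝ (Fin n)) |
      {p : Ω | (p : EuclideanSpace ℝ (Fin n)) ∈ U ∧ Y p = 0}.Finite} :=
  (dense_finitely_many_zeros_general (ι := ⟨_, continuous_subtype_val⟩)
    Subtype.val_injective).mono fun _ hY ↦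
      (hY _ hUcomp).subset fun _ hp ↦ ⟨subset_closure hp.1, hp.2⟩
end
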